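/- If a probability distribution P over variables (X_v)_{v∈V} is faithful to some directed ancestral graph, then P is V-stable. -/

import Mathlib

set_option linter.unusedSectionVars false
set_option linter.unusedVariables false

open MeasureTheory ProbabilityTheory

/-! ## Mixed graphs, m-separation, and related graphical notions -/

/-- A mixed graph with arrows (`i → j`) and bidirected arcs (`i ↔ j`). -/
structure MixedGraph (V : Type) where
  arrow : V → V → Prop
  arc : V → V → Prop

namespace MixedGraph

variable {V : Type} (G : MixedGraph V)

/-- `G.anc i j` : `i` is an ancestor of `j`, i.e. there is a directed path from `i` to `j`. -/
def anc (i j : V) : Prop := Relation.TransGen G.arrow i j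

/-- Adjacency: there is some edge between `i` and `j`. -/
def adj (i j : V) : Prop := G.arrow i j ∨ G.arrow j i ∨ G.arc i j

/-- A directed ancestral graph: a simple mixed graph with arrows and arcs, no directed
cycle, and no arc one of whose endpoints is an ancestor of the other. -/
def IsDirectedAncestral : Prop :=
  (∀ i j, G.arc i j ↔ G.arc j i) ∧
  (∀ i, ¬ G.arc i i) ∧
  (∀ i j, ¬ (G.arrow i j ∧ G.arrow j i)) ∧
  (∀ i j, ¬ (G.arrow i j ∧ G.arc i j)) ∧
  (∀ i, ¬ G.anc i i) ∧
  (∀ i j, G.arc i j → ¬ G.anc i j ∧ ¬ G.anc j i)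

/-- A DAG: only arrows, and no directed cycle. -/
def IsDAG : Prop := (∀ i j, ¬ G.arc i j) ∧ (∀ i, ¬ G.anc i i)

/-- There is an edge between `i` and `j` with an arrowhead at `j`. -/
def headInto (i j : V) : Prop := G.arrow i j ∨ G.arc i j

/-- The inner node `b` of a tripath `⟨a,b,c⟩` is a collider. -/
def collider (a b c : V) : Prop := G.headInto a b ∧ G.headInto c b

/-- The list of nodes `p` is a path which is connecting given `C` : consecutive nodes are
adjacent, no node is repeated, every collider inner node is in `C` or an ancestor of a node
in `C`, and every non-collider inner node is not in `C`. -/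
def Connecting (C : Set V) (p : List V) : Prop :=
  p.Nodup ∧ p.Chain' G.adj ∧
  ∀ t, 0 < t → ∀ (h1 : t - 1 < p.length) (h2 : t < p.length) (h3 : t + 1 < p.length),
    (G.collider (p.get ⟨t-1, h1⟩) (p.get ⟨t, h2⟩) (p.get ⟨t+1, h3⟩) →
      p.get ⟨t, h2⟩ ∈ C ∨ ∃ c ∈ C, G.anc (p.get ⟨t, h2⟩) c) ∧
    (¬ G.collider (p.get ⟨t-1, h1⟩) (p.get ⟨t, h2⟩) (p.get ⟨t+1, h3⟩) →
      p.get ⟨t, h2⟩ ∉ C)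

/-- m-separation : `A ⊥ B | C` in `G` iff there is no connecting path between `A` and `B`
given `C`. -/
def mSep (A B C : Set V) : Prop :=
  ¬ ∃ p : List V, G.Connecting C p ∧
      (∃ a ∈ A, p.head? = some a) ∧ (∃ b ∈ B, p.getLast? = some b)

/-- Two graphs are Markov equivalent if they induce the same independence model by
m-separation. -/
def MarkovEquiv (H : MixedGraph V) : Prop :=
  ∀ A B C : Set V, Disjoint A B → Disjoint A C → Disjoint B C →
    (G.mSep A B C ↔ H.mSep A B C)

/-- `G` is maximal: every pair of non-adjacent nodes is separated given some set. -/
def Maximal : Prop :=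
  ∀ i j : V, i ≠ j → ¬ G.adj i j → ∃ C : Set V, i ∉ C ∧ j ∉ C ∧ G.mSep {i} {j} C

/-- `an(i,j) = (an(i) ∪ an(j)) \ {i,j}`. -/
def anSet (i j : V) : Set V :=
  {k | (G.anc k i ∨ G.anc k j) ∧ k ≠ i ∧ k ≠ j}

/-- The strict form of the minimal order of `G` : `a < b` iff `b` is an ancestor of `a`. -/
def minLt (a b : V) : Prop := G.anc b a

end MixedGraph

/-! ## Abstract (singleton) independence relations and stability conditions -/

section IndependenceRelations

variable {V : Type}

/-- Ordered upward-stability of a singleton independence relation `ci` w.r.t. the strict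
partial order `lt`. -/
def UpStab (lt : V → V → Prop) (ci : V → V → Set V → Prop) : Prop :=
  ∀ i j (C : Set V), i ≠ j → i ∉ C → j ∉ C → ci i j C →
    ∀ k, k ≠ i → k ≠ j → (lt i k ∨ lt j k) → ci i j (C ∪ {k})

/-- Ordered downward-stability of a singleton independence relation `ci` w.r.t. the strict
partial order `lt`. -/
def DownStab (lt : V → V → Prop) (ci : V → V → Set V → Prop) : Prop :=
  ∀ i j (C : Set V), i ≠ j → i ∉ C → j ∉ C → ci i j C →
    ∀ k, ¬ lt i k → ¬ lt j k → (∀ l ∈ C \ {k}, ¬ lt l k) → ci i j (C \ {k})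

/-- The skeleton of an independence relation: `i` and `j` are adjacent iff there is no `C`
with `⟨i,j|C⟩` an independence. -/
def skP (ci : V → V → Set V → Prop) (i j : V) : Prop :=
  i ≠ j ∧ ¬ ∃ C : Set V, i ∉ C ∧ j ∉ C ∧ ci i j C

/-- An output of a natural constraint-based structure-learning algorithm: a graph `H` whose
skeleton is the skeleton of the independence relation `ci`, obtained by directing the edges
of that skeleton according to a `P`-compatible partial order (given here by its strict form
`lt`, required to coincide with the minimal order of `H`), w.r.t. which ordered upward- and
downward-stability hold. -/
def NaturalOutput (ci : V → V → Set V → Prop) (H : MixedGraph V) : Prop :=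
  (∀ i j, H.adj i j ↔ skP ci i j) ∧
  ∃ lt : V → V → Prop, Irreflexive lt ∧ Transitive lt ∧
    (∀ i j, H.arrow i j ↔ (skP ci i j ∧ lt j i)) ∧
    (∀ i j, H.arc i j ↔ (skP ci i j ∧ ¬ lt i j ∧ ¬ lt j i)) ∧
    (∀ a b, lt a b ↔ H.minLt a b) ∧
    UpStab lt ci ∧ DownStab lt ci

/-- Singleton-transitivity. -/
def SingletonTransitive (ci : V → V → Set V → Prop) : Prop :=
  ∀ i j k (C : Set V), i ≠ j → i ≠ k → j ≠ k → i ∉ C → j ∉ C → k ∉ C →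
    ci i j C → ci i j (C ∪ {k}) → ci i k C ∨ ci j k C

/-- `ci` is V-unstable : there is a V-configuration `⟨i,k,j⟩` in the skeleton of `ci` and a
set `C` disjoint from `{i,j,k}` with `⟨i,j|C⟩` and `⟨i,j|C∪{k}⟩` independencies. -/
def VUnstable (ci : V → V → Set V → Prop) : Prop :=
  ∃ i k j : V, ∃ C : Set V, i ≠ j ∧ i ≠ k ∧ j ≠ k ∧
    skP ci i k ∧ skP ci k j ∧ ¬ skP ci i j ∧
    i ∉ C ∧ j ∉ C ∧ k ∉ C ∧ ci i j C ∧ ci i j (C ∪ {k})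

def VStable (ci : V → V → Set V → Prop) : Prop := ¬ VUnstable ci

/-- `ci` is path-unstable : there is a path `⟨i, i₁, …, i_r, k, j⟩` in the skeleton of `ci`
with `i,j` non-adjacent and every `i_n` adjacent to `j`, and a set `C` disjoint from
`{i,j,k}`, such that `⟨i,j | U∪C⟩` and `⟨i,j | U∪C∪{k}⟩` are independencies, where
`U = {i₁,…,i_r}`. -/
def PathUnstable (ci : V → V → Set V → Prop) : Prop :=
  ∃ (i k j : V) (is : List V) (C : Set V),
    (i :: (is ++ [k, j])).Nodup ∧
    (i :: (is ++ [k, j])).Chain' (skP ci) ∧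
    ¬ skP ci i j ∧
    (∀ m ∈ is, skP ci m j) ∧
    i ∉ C ∧ j ∉ C ∧ k ∉ C ∧
    ci i j ({m | m ∈ is} ∪ C) ∧ ci i j (({m | m ∈ is} ∪ C) ∪ {k})

def PathStable (ci : V → V → Set V → Prop) : Prop := ¬ PathUnstable ci

/-- The uniqueness property: all maximal directed ancestral graphs with the skeleton of `ci`
w.r.t. (the minimal order of) which `ci` satisfies ordered upward- and downward-stability
are Markov equivalent. -/
def UniquenessProp (ci : V → V → Set V → Prop) : Prop :=
  ∀ H1 H2 : MixedGraph V,
    H1.IsDirectedAncestral → H1.Maximal → (∀ i j, H1.adj i j ↔ skP ci i j) →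
      UpStab H1.minLt ci → DownStab H1.minLt ci →
    H2.IsDirectedAncestral → H2.Maximal → (∀ i j, H2.adj i j ↔ skP ci i j) →
      UpStab H2.minLt ci → DownStab H2.minLt ci →
    H1.MarkovEquiv H2

/-- The DAG-uniqueness property: all DAGs with the skeleton of `ci` w.r.t. which `ci`
satisfies ordered upward- and downward-stability are Markov equivalent. -/
def DAGUniquenessProp (ci : V → V → Set V → Prop) : Prop :=
  ∀ H1 H2 : MixedGraph V,
    H1.IsDAG → (∀ i j, H1.adj i j ↔ skP ci i j) →
      UpStab H1.minLt ci → DownStab H1.minLt ci →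
    H2.IsDAG → (∀ i j, H2.adj i j ↔ skP ci i j) →
      UpStab H2.minLt ci → DownStab H2.minLt ci →
    H1.MarkovEquiv H2

end IndependenceRelations

/-! ## Probabilistic conditional independence of collections of variables -/

section Probabilistic

variable {V : Type} {Ω : Type} [MeasurableSpace Ω]
  {𝓧 : V → Type}

/-- The tuple of variables `X_A`. -/
def restrictVars (X : ∀ v, Ω → 𝓧 v) (A : Set V) : Ω → ∀ a : A, 𝓧 a :=
  fun ω a => X a ω

variable [StandardBorelSpace Ω] [Nonempty Ω] [∀ v, MeasurableSpace (𝓧 v)]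

theorem measurable_restrictVars {X : ∀ v, Ω → 𝓧 v} (hX : ∀ v, Measurable (X v))
    (A : Set V) : Measurable (restrictVars X A) :=
  measurable_pi_lambda _ fun a => hX a

/-- `⟨A,B|C⟩ ∈ J(P)` : the tuple `X_A` is conditionally independent of `X_B` given `X_C`. -/
def CI (μ : Measure Ω) [IsFiniteMeasure μ] (X : ∀ v, Ω → 𝓧 v)
    (hX : ∀ v, Measurable (X v)) (A B C : Set V) : Prop :=
  CondIndepFun (MeasurableSpace.comap (restrictVars X C) MeasurableSpace.pi)
    (Measurable.comap_le (measurable_restrictVars hX C))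
    (restrictVars X A) (restrictVars X B) μ

/-- Singleton conditional independence `i ⫫ j | C`. -/
def ciP (μ : Measure Ω) [IsFiniteMeasure μ] (X : ∀ v, Ω → 𝓧 v)
    (hX : ∀ v, Measurable (X v)) (i j : V) (C : Set V) : Prop :=
  CI μ X hX {i} {j} C

/-- `P` is Markovian to `G` : `J(G) ⊆ J(P)`. -/
def Markovian (μ : Measure Ω) [IsFiniteMeasure μ] (X : ∀ v, Ω → 𝓧 v)
    (hX : ∀ v, Measurable (X v)) (G : MixedGraph V) : Prop :=
  ∀ A B C : Set V, Disjoint A B → Disjoint A C → Disjoint B C →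
    G.mSep A B C → CI μ X hX A B C

/-- `P` and `G` are faithful : `J(G) = J(P)`. -/
def Faithful (μ : Measure Ω) [IsFiniteMeasure μ] (X : ∀ v, Ω → 𝓧 v)
    (hX : ∀ v, Measurable (X v)) (G : MixedGraph V) : Prop :=
  ∀ A B C : Set V, Disjoint A B → Disjoint A C → Disjoint B C →
    (G.mSep A B C ↔ CI μ X hX A B C)

/-- `P` is converse pairwise Markovian to `G`. -/
def ConvPairwiseMarkov (μ : Measure Ω) [IsFiniteMeasure μ] (X : ∀ v, Ω → 𝓧 v)
    (hX : ∀ v, Measurable (X v)) (G : MixedGraph V) : Prop :=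
  ∀ i j : V, i ≠ j → ciP μ X hX i j (G.anSet i j) → ¬ G.adj i j

end Probabilistic

namespace MixedGraph

variable {V : Type} (G : MixedGraph V)

def okT (C : Set V) (a b c : V) : Prop :=
  (G.collider a b c → b ∈ C ∨ ∃ d ∈ C, G.anc b d) ∧ (¬ G.collider a b c → b ∉ C)

def WW (C : Set V) : List V → Prop
  | [] => True
  | [_] => True
  | [a, b] => G.adj a b
  | a :: b :: c :: l => G.adj a b ∧ G.okT C a b c ∧ WW C (b :: c :: l)

theorem WW_of_index (C : Set V) : ∀ p : List V, p.IsChain G.adj →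
    (∀ t (h : t + 2 < p.length), G.okT C p[t] p[t+1] p[t+2]) → G.WW C p
  | [], _, _ => trivial
  | [_], _, _ => trivial
  | [a, b], h, _ => by simpa [WW] using h
  | a :: b :: c :: l, h, h' => by
    rw [List.isChain_cons_cons] at h
    refine ⟨h.1, h' 0 (by simp), WW_of_index C (b :: c :: l) h.2 ?_⟩
    intro t ht
    exact h' (t+1) (by simp at ht ⊢; omega)

theorem index_of_WW (C : Set V) : ∀ p : List V, G.WW C p → p.IsChain G.adj ∧
    (∀ t (h : t + 2 < p.length), G.okT C p[t] p[t+1] p[t+2])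
  | [], _ => by simp
  | [_], _ => by simp
  | [a, b], h => by
    refine ⟨by simpa [WW] using h, ?_⟩
    intro t ht
    simp at ht
  | a :: b :: c :: l, h => by
    obtain ⟨h1, h2, h3⟩ := h
    obtain ⟨h4, h5⟩ := index_of_WW C _ h3
    refine ⟨List.isChain_cons_cons.2 ⟨h1, h4⟩, ?_⟩
    intro t ht
    cases t with
    | zero => exact h2
    | succ t => exact h5 t (by simp at ht ⊢; omega)

theorem connecting_iff (C : Set V) (p : List V) : G.Connecting C p ↔ p.Nodup ∧ G.WW C p := by
  constructor
  · rintro ⟨h1, h2, h3⟩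
    refine ⟨h1, G.WW_of_index C p h2 ?_⟩
    intro t ht
    exact h3 (t+1) (by omega) (by omega) (by omega) (by omega)
  · rintro ⟨h1, h2⟩
    obtain ⟨h3, h4⟩ := G.index_of_WW C p h2
    refine ⟨h1, h3, ?_⟩
    intro t ht h5 h6 h7
    obtain ⟨s, rfl⟩ : ∃ s, t = s + 1 := ⟨t - 1, by omega⟩
    exact h4 s h7

theorem WW_tail {C : Set V} {a : V} {l : List V} (h : G.WW C (a :: l)) : G.WW C l := by
  match l, h with
  | [], _ => trivial
  | [_], _ => trivial
  | _ :: _ :: _, h => exact h.2.2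

theorem WW_right {C : Set V} (l1 : List V) {l2 : List V} (h : G.WW C (l1 ++ l2)) :
    G.WW C l2 := by
  induction l1 with
  | nil => exact h
  | cons a l ih => exact ih (G.WW_tail h)

theorem WW_left {C : Set V} : ∀ (l1 : List V) {l2 : List V}, G.WW C (l1 ++ l2) → G.WW C l1
  | [], _, _ => trivial
  | [_], _, _ => trivial
  | [a, b], [], h => h
  | [a, b], _ :: _, h => h.1
  | a :: b :: c :: l, _, h => ⟨h.1, h.2.1, WW_left (b :: c :: l) h.2.2⟩

theorem WW_mid {C : Set V} (l1 : List V) {x v y : V} {l2 : List V}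
    (h : G.WW C (l1 ++ x :: v :: y :: l2)) : G.okT C x v y :=
  (G.WW_right l1 h).2.1

theorem WW_join {C : Set V} {x v y : V} {l2 : List V} (h2 : G.WW C (v :: y :: l2))
    (ho : G.okT C x v y) : ∀ (l1 : List V), G.WW C (l1 ++ [x, v]) →
    G.WW C (l1 ++ x :: v :: y :: l2)
  | [], h => ⟨h, ho, h2⟩
  | [a], h => ⟨h.1, h.2.1, h.2.2, ho, h2⟩
  | [a, b], h => ⟨h.1, h.2.1, WW_join h2 ho [b] h.2.2⟩
  | a :: b :: c :: l, h => ⟨h.1, h.2.1, WW_join h2 ho (b :: c :: l) h.2.2⟩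

theorem dir_lemma {C : Set V} (hs : ∀ i j, G.arc i j ↔ G.arc j i) {w : V} :
    ∀ (l : List V) (v z : V), G.WW C (v :: z :: l) → G.arrow v z →
    (z :: l).getLast? = some w → (∃ c ∈ C, G.anc v c) ∨ G.anc v w
  | [], v, z, _, ha, hl => by
    simp at hl
    subst hl
    exact Or.inr (.single ha)
  | y :: l, v, z, h, ha, hl => by
    by_cases hy : G.headInto y z
    · left
      rcases h.2.1.1 ⟨Or.inl ha, hy⟩ with h1 | ⟨c, hc, h1⟩
      · exact ⟨z, h1, .single ha⟩
      · exact ⟨c, hc, .head ha h1⟩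
    · have hadj : G.adj z y := by
        have := (G.index_of_WW C _ h.2.2).1
        exact (List.isChain_cons_cons.1 this).1
      have hzy : G.arrow z y := by
        rcases hadj with h1 | h1 | h1
        · exact h1
        · exact absurd (Or.inl h1) hy
        · exact absurd (Or.inr ((hs _ _).1 h1)) hy
      rcases dir_lemma hs l z y h.2.2 hzy (by simpa using hl) with ⟨c, hc, h1⟩ | h1
      · exact Or.inl ⟨c, hc, .head ha h1⟩
      · exact Or.inr (.head ha h1)

theorem WW_cut {C : Set V} (hs : ∀ i j, G.arc i j ↔ G.arc j i) (hac : ∀ i, ¬ G.anc i i)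
    (l1 l2 l3 : List V) (v : V) (h : G.WW C (l1 ++ v :: (l2 ++ v :: l3))) :
    G.WW C (l1 ++ v :: l3) := by
  have hR : G.WW C (v :: l3) := G.WW_right (l1 ++ v :: l2) (by simpa using h)
  have hL : G.WW C (l1 ++ [v]) := G.WW_left (l1 ++ [v]) (l2 := l2 ++ v :: l3) (by simpa using h)
  rcases List.eq_nil_or_concat l1 with rfl | ⟨l1', x, rfl⟩
  · simpa using hR
  rcases l3 with _ | ⟨y, l3'⟩
  · exact hL
  simp only [List.concat_eq_append, List.append_assoc, List.cons_append, List.nil_append] at *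
  refine G.WW_join hR ?_ l1' hL
  obtain ⟨z, m, hz⟩ : ∃ z m, l2 ++ [v] = z :: m := by cases l2 <;> simp
  obtain ⟨w, m', hw⟩ : ∃ w m', v :: l2 = m' ++ [w] := by
    rcases List.eq_nil_or_concat (v :: l2) with h0 | ⟨m', w, h0⟩
    · simp at h0
    · exact ⟨w, m', by simpa using h0⟩
  have e1 : l2 ++ v :: y :: l3' = z :: (m ++ y :: l3') := by
    have : l2 ++ v :: y :: l3' = (l2 ++ [v]) ++ y :: l3' := by simp
    rw [this, hz]; simp
  have e2 : v :: (l2 ++ v :: y :: l3') = m' ++ w :: v :: y :: l3' := by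
    have : v :: (l2 ++ v :: y :: l3') = (v :: l2) ++ v :: y :: l3' := by simp
    rw [this, hw]; simp
  have o1 : G.okT C x v z := by
    rw [e1] at h
    exact G.WW_mid l1' h
  have o2 : G.okT C w v y := by
    rw [e2] at h
    exact G.WW_mid (l1' ++ x :: m') (by simpa using h)
  constructor
  · rintro ⟨c1, c2⟩
    by_cases hzv : G.headInto z v
    · exact o1.1 ⟨c1, hzv⟩
    · have hw2 : G.WW C (v :: z :: m) := by
        have h4 := G.WW_right (l1' ++ [x]) (l2 := v :: (l2 ++ v :: y :: l3')) (by simpa using h)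
        rw [e1] at h4
        exact G.WW_left (v :: z :: m) (l2 := y :: l3') (by simpa using h4)
      have hadj : G.adj v z := (List.isChain_cons_cons.1 (G.index_of_WW C _ hw2).1).1
      have ha : G.arrow v z := by
        rcases hadj with h1 | h1 | h1
        · exact h1
        · exact absurd (Or.inl h1) hzv
        · exact absurd (Or.inr ((hs _ _).1 h1)) hzv
      rcases G.dir_lemma hs (w := v) m v z hw2 ha (by rw [← hz]; simp) with h1 | h1
      · exact Or.inr h1
      · exact absurd h1 (hac v)
  · intro hn
    by_cases hx : G.headInto x v
    · exact o2.2 fun hc => hn ⟨hx, hc.2⟩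
    · exact o1.2 fun hc => hx hc.1

theorem exists_path {C : Set V} (hs : ∀ i j, G.arc i j ↔ G.arc j i) (hac : ∀ i, ¬ G.anc i i)
    (a b : V) : ∀ (n : ℕ) (p : List V), p.length = n → G.WW C p → p.head? = some a →
    p.getLast? = some b → ∃ q : List V, G.Connecting C q ∧ q.head? = some a ∧
      q.getLast? = some b := by
  intro n
  induction n using Nat.strong_induction_on with
  | _ n ih =>
    intro p hp hw h1 h2
    by_cases hnd : p.Nodup
    · exact ⟨p, (G.connecting_iff C p).2 ⟨hnd, hw⟩, h1, h2⟩
    · have : ∃ v, List.Duplicate v p := by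
        by_contra hcon
        push Not at hcon
        exact hnd (List.nodup_iff_forall_not_duplicate.2 hcon)
      obtain ⟨v, hv⟩ := this
      have hdec : ∃ l1 l2 l3, p = l1 ++ v :: (l2 ++ v :: l3) := by
        clear hp hw h1 h2 hnd
        induction hv with
        | cons_mem hm =>
          obtain ⟨s, t, rfl⟩ := List.append_of_mem hm
          exact ⟨[], s, t, rfl⟩
        | cons_duplicate _ ih =>
          obtain ⟨l1, l2, l3, rfl⟩ := ih
          exact ⟨_ :: l1, l2, l3, rfl⟩
      obtain ⟨l1, l2, l3, rfl⟩ := hdec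
      refine ih _ ?_ (l1 ++ v :: l3) rfl (G.WW_cut hs hac l1 l2 l3 v hw) ?_ ?_
      · rw [← hp]; simp
      · cases l1 <;> simpa using h1
      · rw [← h2]
        simp [List.getLast?_append, List.getLast?_cons]

theorem okT_mono {C : Set V} {a b c k : V} (hb : b ≠ k) (h : G.okT C a b c) :
    G.okT (C ∪ {k}) a b c := by
  refine ⟨fun hc => ?_, fun hc => ?_⟩
  · rcases h.1 hc with h1 | ⟨d, hd, h1⟩
    · exact Or.inl (Or.inl h1)
    · exact Or.inr ⟨d, Or.inl hd, h1⟩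
  · rintro (h1 | h1)
    · exact h.2 hc h1
    · exact hb h1

theorem WW_mono_left {C : Set V} {k : V} : ∀ (l : List V), k ∉ l → G.WW C (l ++ [k]) →
    G.WW (C ∪ {k}) (l ++ [k])
  | [], _, _ => trivial
  | [_], _, h => h
  | [a, b], hk, h => ⟨h.1, G.okT_mono (by rintro rfl; simp at hk) h.2.1, h.2.2⟩
  | a :: b :: c :: l, hk, h => ⟨h.1, G.okT_mono (by rintro rfl; simp at hk) h.2.1,
      WW_mono_left (b :: c :: l) (fun h' => hk (List.mem_cons_of_mem _ h')) h.2.2⟩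

theorem WW_mono_right {C : Set V} {k : V} : ∀ (l : List V) (a : V), k ∉ l → G.WW C (a :: l) →
    G.WW (C ∪ {k}) (a :: l)
  | [], _, _, _ => trivial
  | [_], _, _, h => h
  | b :: c :: l, a, hk, h => ⟨h.1, G.okT_mono (by rintro rfl; simp at hk) h.2.1,
      WW_mono_right (c :: l) b (fun h' => hk (List.mem_cons_of_mem _ h')) h.2.2⟩

theorem singleton_trans (hG : G.IsDirectedAncestral) {i j k : V} {C : Set V} (hik : i ≠ k)
    (hjk : j ≠ k) (hk : k ∉ C) (h1 : ¬ G.mSep {i} {k} C) (h2 : ¬ G.mSep {k} {j} C) :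
    ¬ G.mSep {i} {j} C ∨ ¬ G.mSep {i} {j} (C ∪ {k}) := by
  obtain ⟨hs, -, -, -, hac, -⟩ := hG
  simp only [mSep, not_not, Set.mem_singleton_iff, exists_eq_left] at h1 h2 ⊢
  obtain ⟨p, hp, hpi, hpk⟩ := h1
  obtain ⟨q, hq, hqk, hqj⟩ := h2
  rw [connecting_iff] at hp hq
  obtain ⟨pn, pw⟩ := hp
  obtain ⟨qn, qw⟩ := hq
  obtain ⟨p', rfl⟩ := List.getLast?_eq_some_iff.1 hpk
  obtain ⟨q', rfl⟩ := List.head?_eq_some_iff.1 hqk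
  have hkp : k ∉ p' := by
    intro hm
    rw [List.nodup_append] at pn
    exact pn.2.2 k hm k (by simp) rfl
  have hkq : k ∉ q' := (List.nodup_cons.1 qn).1
  have pw' := G.WW_mono_left p' hkp pw
  have qw' := G.WW_mono_right q' k hkq qw
  rcases List.eq_nil_or_concat p' with rfl | ⟨l, x, rfl⟩
  · simp at hpi
    exact absurd hpi.symm hik
  rcases q' with _ | ⟨y, m⟩
  · simp at hqj
    exact absurd hqj.symm hjk
  simp only [List.concat_eq_append, List.append_assoc, List.cons_append, List.nil_append] at *
  have hh : (l ++ x :: k :: y :: m).head? = some i := by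
    cases l <;> simpa using hpi
  have hl : (l ++ x :: k :: y :: m).getLast? = some j := by
    rw [← hqj]
    simp [List.getLast?_append, List.getLast?_cons]
  by_cases hc : G.collider x k y
  · right
    exact G.exists_path hs hac i j _ _ rfl
      (G.WW_join qw' ⟨fun _ => Or.inl (Or.inr rfl), fun h => absurd hc h⟩ l pw') hh hl
  · left
    exact G.exists_path hs hac i j _ _ rfl
      (G.WW_join qw ⟨fun h => absurd h hc, fun _ => hk⟩ l pw) hh hl

end MixedGraph

/-- Corollary 16 of Sadeghi–Soo. -/
theorem statement_8 {V : Type} [Fintype V]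
    {Ω : Type} [MeasurableSpace Ω] [StandardBorelSpace Ω] [Nonempty Ω]
    (μ : Measure Ω) [IsProbabilityMeasure μ]
    {𝓧 : V → Type} [∀ v, MeasurableSpace (𝓧 v)]
    (X : ∀ v, Ω → 𝓧 v) (hX : ∀ v, Measurable (X v))
    (hfaith : ∃ G : MixedGraph V, G.IsDirectedAncestral ∧ Faithful μ X hX G) :
    VStable (ciP μ X hX) := by
  obtain ⟨G, hG, hF⟩ := hfaith
  rintro ⟨i, k, j, C, hij, hik, hjk, s1, s2, -, hi, hj, hk, c1, c2⟩
  have e1 : ¬ G.mSep {i} {k} C := fun h => s1.2 ⟨C, hi, hk,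
    (hF {i} {k} C (by simpa using hik) (by simpa using hi) (by simpa using hk)).1 h⟩
  have e2 : ¬ G.mSep {k} {j} C := fun h => s2.2 ⟨C, hk, hj,
    (hF {k} {j} C (by simpa using hjk.symm) (by simpa using hk) (by simpa using hj)).1 h⟩
  rcases G.singleton_trans hG hik hjk hk e1 e2 with h | h
  · exact h ((hF {i} {j} C (by simpa using hij) (by simpa using hi) (by simpa using hj)).2 c1)
  · refine h ((hF {i} {j} (C ∪ {k}) (by simpa using hij) ?_ ?_).2 c2)
    · rw [Set.disjoint_singleton_left]
      rintro (h' | h')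
      · exact hi h'
      · exact hik h'
    · rw [Set.disjoint_singleton_left]
      rintro (h' | h')
      · exact hj h'
      · exact hjk h'
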